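/- Let m = 2^α p_1^{α_1} p_2^{α_2} ⋯ p_k^{α_k} be the prime factorization of an even number m ≥ 4, where p_1,…,p_k are distinct odd primes and α ≥ 1. Then for every positive integer n the crown C_m ⊙ K̄_n admits edge-magic labelings realizing at least (α_1 + ⋯ + α_k)(n+1) mutually different valences; if moreover α ≥ 2, it admits edge-magic labelings realizing at least (1 + α_1 + ⋯ + α_k)(n+1) mutually different valences. -/

import Mathlib

/-- An edge-magic labeling of a finite graph presented by an endpoint map
`ends : E → V × V` (loops and multiple edges allowed): the vertex labels `fv`
and edge labels `fe` together form a bijection onto `{1, …, |V| + |E|}` and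
every edge `e` satisfies `fv (ends e).1 + fe e + fv (ends e).2 = k`.
The constant `k` is the valence. -/
def IsEdgeMagic {V E : Type} [Fintype V] [Fintype E] (ends : E → V × V)
    (fv : V → ℕ) (fe : E → ℕ) (k : ℕ) : Prop :=
  Function.Injective (Sum.elim fv fe) ∧
  Set.range (Sum.elim fv fe) = Set.Icc 1 (Fintype.card V + Fintype.card E) ∧
  ∀ e : E, fv (ends e).1 + fe e + fv (ends e).2 = k

/-- A super edge-magic labeling: edge-magic, and moreover the vertex labels
are exactly `{1, …, |V|}`. -/
def IsSuperEdgeMagic {V E : Type} [Fintype V] [Fintype E] (ends : E → V × V)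
    (fv : V → ℕ) (fe : E → ℕ) (k : ℕ) : Prop :=
  IsEdgeMagic ends fv fe k ∧ Set.range fv = Set.Icc 1 (Fintype.card V)

/-- The cycle `C_m`: vertices `Fin m`, edge `i` joins `i` to `i+1 (mod m)`. -/
def cycleEnds (m : ℕ) : Fin m → Fin m × Fin m :=
  fun i => (i, ⟨(i.val + 1) % m, Nat.mod_lt _ i.pos⟩)

/-- The crown `C_m ⊙ K̄_n`: vertices are `Sum.inl i` (cycle vertices `v_i`) and
`Sum.inr (i, j)` (pendant vertices `v_i^j`); edges are the `m` cycle edges and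
the `m * n` pendant edges. -/
def crownEnds (m n : ℕ) :
    (Fin m ⊕ Fin m × Fin n) → (Fin m ⊕ Fin m × Fin n) × (Fin m ⊕ Fin m × Fin n)
  | Sum.inl i => (Sum.inl i, Sum.inl ⟨(i.val + 1) % m, Nat.mod_lt _ i.pos⟩)
  | Sum.inr p => (Sum.inl p.1, Sum.inr p)

/-- The graph `K_{1,n}^l`: the star `K_{1,n}` (center `none`, leaves `some j`)
with a loop (edge `none`) attached at the center. -/
def starLoopEnds (n : ℕ) : Option (Fin n) → Option (Fin n) × Option (Fin n)
  | none => (none, none)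
  | some j => (none, some j)

/-- Zero-based edge-magic labeling of the cycle `C_m`, with vertex labels `f`, edge labels `e`
in `{0, …, 2m-1}` and constant `K`. -/
structure CycMagic (m K : ℕ) (f e : ℕ → ℕ) : Prop where
  f_lt : ∀ i < m, f i < 2 * m
  e_lt : ∀ i < m, e i < 2 * m
  f_inj : ∀ i < m, ∀ j < m, f i = f j → i = j
  e_inj : ∀ i < m, ∀ j < m, e i = e j → i = j
  f_ne_e : ∀ i < m, ∀ j < m, f i ≠ e j
  magic : ∀ i < m, f i + e i + f ((i + 1) % m) = K

def baseF2 (j i : ℕ) : ℕ :=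
  if i = 4 * j + 1 then 4 * j + 2
  else if i ≤ 2 * j then (if i % 2 = 0 then i / 2 else 2 * j + 2 + i / 2)
  else (if i % 2 = 0 then 2 * j + 1 + i / 2 else i / 2 + 1)

def baseF0 (j i : ℕ) : ℕ :=
  if i = 0 then 6 * j - 1
  else if i = 4 * j - 1 then 0
  else if i < 2 * j then (if i % 2 = 0 then 2 * j + i / 2 else i / 2 + 1)
  else (if i % 2 = 0 then i / 2 + 1 else i / 2 + 2 * j)

lemma succ_mod_of_lt {m i : ℕ} (hi : i < m) :
    (i + 1) % m = if i + 1 = m then 0 else i + 1 := by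
  split_ifs with h
  · rw [h, Nat.mod_self]
  · exact Nat.mod_eq_of_lt (by omega)

/-- explicit edge labels, case `m = 4j+2` -/
def baseE2 (j i : ℕ) : ℕ :=
  if i = 4 * j + 1 then 6 * j + 2
  else if i = 4 * j then 2 * j + 1
  else if i = 2 * j then 8 * j + 3
  else 8 * j + 2 - i

def baseE0 (j i : ℕ) : ℕ :=
  if i = 0 then 4 * j - 1
  else if i = 4 * j - 1 then 4 * j
  else if i = 4 * j - 2 then 8 * j - 1
  else if i = 2 * j - 1 then 8 * j - 2
  else 8 * j - 2 - i

lemma base2 (j : ℕ) (hj : 1 ≤ j) :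
    CycMagic (4 * j + 2) (10 * j + 4) (baseF2 j) (baseE2 j) where
  f_lt i hi := by unfold baseF2; split_ifs <;> omega
  e_lt i hi := by unfold baseE2; split_ifs <;> omega
  f_inj i hi i' hi' h := by unfold baseF2 at h; split_ifs at h <;> omega
  e_inj i hi i' hi' h := by unfold baseE2 at h; split_ifs at h <;> omega
  f_ne_e i hi i' hi' h := by unfold baseF2 baseE2 at h; split_ifs at h <;> omega
  magic i hi := by
    have hs := succ_mod_of_lt hi
    have hs' : (i + 1 = 4 * j + 2 ∧ (i + 1) % (4 * j + 2) = 0) ∨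
        (i + 1 < 4 * j + 2 ∧ (i + 1) % (4 * j + 2) = i + 1) := by
      split_ifs at hs <;> omega
    clear hs
    generalize (i + 1) % (4 * j + 2) = i' at hs'
    unfold baseF2 baseE2
    split_ifs <;> omega

set_option maxHeartbeats 2000000 in
lemma base0 (j : ℕ) (hj : 1 ≤ j) :
    CycMagic (4 * j) (10 * j - 1) (baseF0 j) (baseE0 j) where
  f_lt i hi := by unfold baseF0; split_ifs <;> omega
  e_lt i hi := by unfold baseE0; split_ifs <;> omega
  f_inj i hi i' hi' h := by unfold baseF0 at h; split_ifs at h <;> omega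
  e_inj i hi i' hi' h := by unfold baseE0 at h; split_ifs at h <;> omega
  f_ne_e i hi i' hi' h := by unfold baseF0 baseE0 at h; split_ifs at h <;> omega
  magic i hi := by
    have hs := succ_mod_of_lt hi
    have hs' : (i + 1 = 4 * j ∧ (i + 1) % (4 * j) = 0) ∨
        (i + 1 < 4 * j ∧ (i + 1) % (4 * j) = i + 1) := by
      split_ifs at hs <;> omega
    clear hs
    generalize (i + 1) % (4 * j) = i' at hs'
    unfold baseF0 baseE0
    split_ifs <;> omega

lemma base_exists (a : ℕ) (ha : 4 ≤ a) (h2 : 2 ∣ a) :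
    ∃ f e, CycMagic a (5 * (a / 2) - 1) f e := by
  rcases Nat.even_or_odd' (a / 2) with ⟨j, hj | hj⟩
  · have h1 : a = 4 * j := by omega
    have h3 : 5 * (a / 2) - 1 = 10 * j - 1 := by omega
    rw [h3, h1]
    exact ⟨_, _, base0 j (by omega)⟩
  · have h1 : a = 4 * j + 2 := by omega
    have h3 : 5 * (a / 2) - 1 = 10 * j + 4 := by omega
    rw [h3, h1]
    exact ⟨_, _, base2 j (by omega)⟩

/-- second coordinate of the vertex in block `q`, residue `b` -/
def prodY (s q b : ℕ) : ℕ := if b % 2 = 0 then q else if q < s then q + s + 1 else q - s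

def prodZ (s a q b : ℕ) : ℕ :=
  if b + 1 = a then (if q < s then 2 * s - 2 - 2 * q else if q < 2 * s then 4 * s - 1 - 2 * q
    else 2 * s)
  else (if q < s then 2 * s - 1 - 2 * q else 4 * s - 2 * q)

lemma mul_add_inj {r x y u v : ℕ} (hu : u < r) (hv : v < r) (h : r * x + u = r * y + v) :
    x = y ∧ u = v := by
  have h1 : (r * x + u) / r = (r * y + v) / r := by rw [h]
  have hr : 0 < r := by omega
  rw [Nat.mul_add_div hr, Nat.mul_add_div hr, Nat.div_eq_of_lt hu, Nat.div_eq_of_lt hv] at h1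
  simp only [add_zero] at h1
  subst h1
  exact ⟨rfl, by omega⟩

lemma mul_add_lt_mul {r x u N : ℕ} (hu : u < r) (hx : x < N) : r * x + u < r * N := by
  have : r * (x + 1) ≤ r * N := Nat.mul_le_mul_left r hx
  rw [Nat.mul_add] at this
  omega

lemma prod_cyc {a K s : ℕ} {f e : ℕ → ℕ} (ha : 2 ∣ a) (h : CycMagic a K f e) :
    ∃ f' e', CycMagic (a * (2 * s + 1)) ((2 * s + 1) * K + 3 * s) f' e' := by
  rcases Nat.eq_zero_or_pos a with h0 | hpos
  · subst h0
    exact ⟨f, e, by constructor <;> intro i hi <;> omega⟩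
  refine ⟨fun i => (2 * s + 1) * f (i % a) + prodY s (i / a) (i % a),
    fun i => (2 * s + 1) * e (i % a) + prodZ s a (i / a) (i % a), ?_⟩
  have hb : ∀ i, i % a < a := fun i => Nat.mod_lt _ hpos
  have hq : ∀ i, i < a * (2 * s + 1) → i / a < 2 * s + 1 := fun i hi =>
    Nat.div_lt_of_lt_mul hi
  have hY : ∀ q b, q < 2 * s + 1 → prodY s q b < 2 * s + 1 := by
    intro q b hq; unfold prodY; split_ifs <;> omega
  have hZ : ∀ q b, q < 2 * s + 1 → prodZ s a q b < 2 * s + 1 := by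
    intro q b hq; unfold prodZ; split_ifs <;> omega
  have hYi : ∀ q q' b, q < 2 * s + 1 → q' < 2 * s + 1 → prodY s q b = prodY s q' b → q = q' := by
    intro q q' b hq hq' h; unfold prodY at h; split_ifs at h <;> omega
  have hZi : ∀ q q' b, q < 2 * s + 1 → q' < 2 * s + 1 →
      prodZ s a q b = prodZ s a q' b → q = q' := by
    intro q q' b hq hq' h; unfold prodZ at h; split_ifs at h <;> omega
  have hrec : ∀ i j, i % a = j % a → i / a = j / a → i = j := by
    intro i j h1 h2
    rw [← Nat.div_add_mod i a, ← Nat.div_add_mod j a, h1, h2]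
  have hcomm : 2 * (a * (2 * s + 1)) = (2 * s + 1) * (2 * a) := by ring
  constructor
  · intro i hi
    rw [hcomm]
    exact mul_add_lt_mul (hY _ _ (hq i hi)) (h.f_lt _ (hb i))
  · intro i hi
    rw [hcomm]
    exact mul_add_lt_mul (hZ _ _ (hq i hi)) (h.e_lt _ (hb i))
  · intro i hi j hj hij
    obtain ⟨h1, h2⟩ := mul_add_inj (hY _ _ (hq i hi)) (hY _ _ (hq j hj)) hij
    have h3 := h.f_inj _ (hb i) _ (hb j) h1
    rw [h3] at h2
    exact hrec i j h3 (hYi _ _ _ (hq i hi) (hq j hj) h2)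
  · intro i hi j hj hij
    obtain ⟨h1, h2⟩ := mul_add_inj (hZ _ _ (hq i hi)) (hZ _ _ (hq j hj)) hij
    have h3 := h.e_inj _ (hb i) _ (hb j) h1
    rw [h3] at h2
    exact hrec i j h3 (hZi _ _ _ (hq i hi) (hq j hj) h2)
  · intro i hi j hj hij
    obtain ⟨h1, h2⟩ := mul_add_inj (hY _ _ (hq i hi)) (hZ _ _ (hq j hj)) hij
    exact h.f_ne_e _ (hb i) _ (hb j) h1
  · intro i hi
    have hm := h.magic _ (hb i)
    have hqi := hq i hi
    have hbi := hb i
    have hdm := Nat.div_add_mod i a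
    have hY0 : ∀ q, prodY s q 0 = q := fun q => by simp [prodY]
    generalize i / a = q at *
    generalize i % a = b at *
    have key : f ((i + 1) % (a * (2 * s + 1)) % a) = f ((b + 1) % a) ∧
        prodY s q b + prodZ s a q b + prodY s ((i + 1) % (a * (2 * s + 1)) / a)
          ((i + 1) % (a * (2 * s + 1)) % a) = 3 * s := by
      by_cases hba : b + 1 = a
      · have hi1 : i + 1 = a * (q + 1) := by rw [Nat.mul_add]; omega
        rw [hba, Nat.mod_self]
        by_cases hqs : q = 2 * s
        · have : (i + 1) % (a * (2 * s + 1)) = 0 := by rw [hi1, hqs, Nat.mod_self]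
          rw [this, Nat.zero_mod, Nat.zero_div, hY0]
          refine ⟨rfl, ?_⟩
          unfold prodY prodZ
          split_ifs <;> omega
        · have : (i + 1) % (a * (2 * s + 1)) = a * (q + 1) := by
            rw [hi1]
            apply Nat.mod_eq_of_lt
            exact Nat.mul_lt_mul_of_pos_left (by omega) hpos
          rw [this, Nat.mul_mod_right, Nat.mul_div_cancel_left _ hpos, hY0]
          refine ⟨rfl, ?_⟩
          unfold prodY prodZ
          split_ifs <;> omega
      · have hlt : b + 1 < a := by omega
        have hi1 : i + 1 = a * q + (b + 1) := by omega
        have : (i + 1) % (a * (2 * s + 1)) = a * q + (b + 1) := by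
          rw [hi1]
          exact Nat.mod_eq_of_lt (mul_add_lt_mul hlt hqi)
        rw [this, Nat.mul_add_mod, Nat.mul_add_div hpos, Nat.mod_eq_of_lt hlt,
          Nat.div_eq_of_lt hlt, add_zero]
        refine ⟨rfl, ?_⟩
        unfold prodY prodZ
        split_ifs <;> omega
    obtain ⟨k1, k2⟩ := key
    rw [k1, ← k2, ← hm]
    ring

lemma isEdgeMagic_of {V E : Type} [Fintype V] [Fintype E] (ends : E → V × V)
    (fv : V → ℕ) (fe : E → ℕ) (k : ℕ)
    (hinj : Function.Injective (Sum.elim fv fe))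
    (hmem : ∀ x, Sum.elim fv fe x ∈ Finset.Icc 1 (Fintype.card V + Fintype.card E))
    (hk : ∀ e : E, fv (ends e).1 + fe e + fv (ends e).2 = k) :
    IsEdgeMagic ends fv fe k := by
  classical
  refine ⟨hinj, ?_, hk⟩
  have h1 : Finset.univ.image (Sum.elim fv fe) = Finset.Icc 1 (Fintype.card V + Fintype.card E) := by
    apply Finset.eq_of_subset_of_card_le
    · intro y hy
      obtain ⟨x, -, rfl⟩ := Finset.mem_image.mp hy
      exact hmem x
    · rw [Finset.card_image_of_injective _ hinj]
      simp
  rw [← Finset.coe_Icc, ← h1]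
  simp

lemma crown_of_cyc {m n K c : ℕ} {f e : ℕ → ℕ} (h : CycMagic m K f e) (hc : c < n + 1) :
    ∃ fv fe, IsEdgeMagic (crownEnds m n) fv fe ((n + 1) * K + (c + n) + 3) := by
  let C : Fin (n + 1) := ⟨c, hc⟩
  let A : (Fin m ⊕ Fin m × Fin n) → ℕ :=
    Sum.elim (fun i => f i.val) (fun p => f ((p.1.val + 1) % m))
  let B : (Fin m ⊕ Fin m × Fin n) → ℕ :=
    Sum.elim (fun _ => c) (fun p => (C.succAbove p.2).val)
  let D : (Fin m ⊕ Fin m × Fin n) → ℕ :=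
    Sum.elim (fun i => e i.val) (fun p => e p.1.val)
  have hBlt : ∀ x, B x < n + 1 := by
    rintro (i | p)
    · exact hc
    · exact (C.succAbove p.2).isLt
  have hAlt : ∀ x, A x < 2 * m := by
    rintro (i | p)
    · exact h.f_lt _ i.isLt
    · exact h.f_lt _ (Nat.mod_lt _ p.1.pos)
  have hDlt : ∀ x, D x < 2 * m := by
    rintro (i | p)
    · exact h.e_lt _ i.isLt
    · exact h.e_lt _ p.1.isLt
  have hB1 : ∀ p : Fin m × Fin n, (C.succAbove p.2).val ≠ c := by
    intro p hp
    exact Fin.succAbove_ne C p.2 (Fin.ext hp)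
  have hB2 : ∀ j j' : Fin n, (C.succAbove j).val = (C.succAbove j').val → j = j' := by
    intro j j' hj
    exact Fin.succAbove_right_injective (Fin.ext hj)
  have hsucc : ∀ i j : Fin m, (i.val + 1) % m = (j.val + 1) % m → i = j := by
    intro i j hij
    rw [succ_mod_of_lt i.isLt, succ_mod_of_lt j.isLt] at hij
    apply Fin.ext
    have := i.isLt
    have := j.isLt
    split_ifs at hij <;> omega
  have hAB : ∀ x y, A x = A y → B x = B y → x = y := by
    rintro (i | ⟨i, j⟩) (i' | ⟨i', j'⟩) hA hB
    · exact congrArg _ (Fin.ext (h.f_inj _ i.isLt _ i'.isLt hA))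
    · exact absurd hB.symm (hB1 (i', j'))
    · exact absurd hB (hB1 (i, j))
    · have h1 := hsucc i i' (h.f_inj _ (Nat.mod_lt _ i.pos) _ (Nat.mod_lt _ i.pos) hA)
      have h2 := hB2 j j' hB
      rw [h1, h2]
  have hDB : ∀ x y, D x = D y → B x = B y → x = y := by
    rintro (i | ⟨i, j⟩) (i' | ⟨i', j'⟩) hA hB
    · exact congrArg _ (Fin.ext (h.e_inj _ i.isLt _ i'.isLt hA))
    · exact absurd hB.symm (hB1 (i', j'))
    · exact absurd hB (hB1 (i, j))
    · have h1 : i = i' := Fin.ext (h.e_inj _ i.isLt _ i'.isLt hA)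
      have h2 := hB2 j j' hB
      rw [h1, h2]
  have hAD : ∀ x y, A x ≠ D y := by
    rintro (i | ⟨i, j⟩) (i' | ⟨i', j'⟩)
    · exact h.f_ne_e _ i.isLt _ i'.isLt
    · exact h.f_ne_e _ i.isLt _ i'.isLt
    · exact h.f_ne_e _ (Nat.mod_lt _ i.pos) _ i'.isLt
    · exact h.f_ne_e _ (Nat.mod_lt _ i.pos) _ i'.isLt
  have hcard : Fintype.card (Fin m ⊕ Fin m × Fin n) + Fintype.card (Fin m ⊕ Fin m × Fin n)
      = (n + 1) * (2 * m) := by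
    simp only [Fintype.card_sum, Fintype.card_prod, Fintype.card_fin]; ring
  refine ⟨fun x => (n + 1) * A x + B x + 1, fun x => (n + 1) * D x + (n - B x) + 1,
    isEdgeMagic_of _ _ _ _ ?_ ?_ ?_⟩
  · rintro (x | x) (y | y) hxy <;> simp only [Sum.elim_inl, Sum.elim_inr, add_left_inj] at hxy
    · obtain ⟨h1, h2⟩ := mul_add_inj (hBlt x) (hBlt y) hxy
      rw [hAB x y h1 h2]
    · obtain ⟨h1, h2⟩ := mul_add_inj (hBlt x) (by omega) hxy
      exact absurd h1 (hAD x y)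
    · obtain ⟨h1, h2⟩ := mul_add_inj (by omega) (hBlt y) hxy
      exact absurd h1.symm (hAD y x)
    · obtain ⟨h1, h2⟩ := mul_add_inj (by omega) (by omega) hxy
      have := hBlt x
      have := hBlt y
      rw [hDB x y h1 (by omega)]
  · rw [hcard]
    rintro (x | x) <;> simp only [Sum.elim_inl, Sum.elim_inr, Finset.mem_Icc]
    · have := mul_add_lt_mul (hBlt x) (hAlt x)
      omega
    · have := mul_add_lt_mul (show n - B x < n + 1 by omega) (hDlt x)
      omega
  · rintro (i | p)
    · have hm := h.magic _ i.isLt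
      obtain ⟨d, hd⟩ : ∃ d, n = c + d := ⟨n - c, by omega⟩
      simp only [crownEnds, A, B, D, Sum.elim_inl]
      rw [← hm]
      have : n - c = d := by omega
      rw [this]
      rw [hd]
      ring
    · have hm := h.magic _ p.1.isLt
      have hlt := (C.succAbove p.2).isLt
      simp only [crownEnds, A, B, D, Sum.elim_inl, Sum.elim_inr]
      rw [← hm]
      generalize (C.succAbove p.2).val = l at *
      generalize f p.1.val = x1
      generalize e p.1.val = x2
      generalize f ((p.1.val + 1) % m) = x3
      clear * - hlt
      obtain ⟨d, hd⟩ : ∃ d, n = l + d := ⟨n - l, by omega⟩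
      have : n - l = d := by omega
      rw [this]
      subst hd
      ring

lemma crown_valence (m n s c : ℕ) (hdvd : (2 * s + 1) ∣ m) (h2 : 2 ∣ m)
    (h4 : 4 ≤ m / (2 * s + 1)) (hc : c < n + 1) :
    ∃ fv fe, IsEdgeMagic (crownEnds m n) fv fe
      ((n + 1) * (5 * (m / 2) - 1 + s) + (c + n) + 3) := by
  obtain ⟨a, ha⟩ := hdvd
  have hdiv : m / (2 * s + 1) = a := by rw [ha]; exact Nat.mul_div_cancel_left _ (by omega)
  rw [hdiv] at h4
  have ha2 : 2 ∣ a := by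
    rw [ha] at h2
    exact (Nat.Coprime.dvd_mul_left (by
      rw [Nat.coprime_two_left]; exact ⟨s, rfl⟩)).mp h2
  obtain ⟨f, e, hfe⟩ := base_exists a h4 ha2
  obtain ⟨f', e', hfe'⟩ := prod_cyc (s := s) ha2 hfe
  rw [Nat.mul_comm, ← ha] at hfe'
  have : (2 * s + 1) * (5 * (a / 2) - 1) + 3 * s = 5 * (m / 2) - 1 + s := by
    obtain ⟨b, rfl⟩ := ha2
    have h5 : m / 2 = (2 * s + 1) * b := by
      rw [ha, Nat.mul_left_comm]; exact Nat.mul_div_cancel_left _ (by norm_num)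
    rw [h5, Nat.mul_div_cancel_left _ (by norm_num : 0 < 2)]
    obtain ⟨d, rfl⟩ : ∃ d, b = d + 1 := ⟨b - 1, by omega⟩
    have e1 : 5 * (d + 1) - 1 = 5 * d + 4 := by omega
    have e2 : 5 * ((2 * s + 1) * (d + 1)) - 1 = 5 * ((2 * s + 1) * d) + 10 * s + 4 := by
      rw [Nat.mul_add (2 * s + 1) d 1]; omega
    rw [e1, e2]
    ring
  rw [this] at hfe'
  exact crown_of_cyc hfe' hc

lemma valence_set (m n : ℕ) (h2 : 2 ∣ m) (R : Finset ℕ)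
    (hR : ∀ r ∈ R, r % 2 = 1 ∧ r ∣ m ∧ 4 ≤ m / r) :
    ∃ S : Finset ℕ, R.card * (n + 1) ≤ S.card ∧
      ∀ k ∈ S, ∃ fv fe, IsEdgeMagic (crownEnds m n) fv fe k := by
  refine ⟨(R ×ˢ Finset.range (n + 1)).image
    fun p => (n + 1) * (5 * (m / 2) - 1 + p.1 / 2) + (p.2 + n) + 3, ?_, ?_⟩
  · rw [Finset.card_image_of_injOn]
    · simp
    · rintro ⟨r, c⟩ hr ⟨r', c'⟩ hr' heq
      simp only [Finset.coe_product, Set.mem_prod, Finset.mem_coe, Finset.mem_range] at hr hr'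
      dsimp only at heq
      obtain ⟨h1, h3⟩ := mul_add_inj hr.2 hr'.2
        (show (n + 1) * (5 * (m / 2) - 1 + r / 2) + c
          = (n + 1) * (5 * (m / 2) - 1 + r' / 2) + c' by omega)
      have := (hR r hr.1).1
      have := (hR r' hr'.1).1
      have h5 : r = r' := by omega
      rw [h5, h3]
  · intro k hk
    obtain ⟨⟨r, c⟩, hrc, rfl⟩ := Finset.mem_image.mp hk
    simp only [Finset.mem_product, Finset.mem_range] at hrc
    obtain ⟨h1, h3, h4⟩ := hR r hrc.1
    have hr : 2 * (r / 2) + 1 = r := by omega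
    exact crown_valence m n (r / 2) c (by rw [hr]; exact h3) h2 (by rw [hr]; exact h4) hrc.2

lemma sum_lt_prod_succ (S : Finset ℕ) (g : ℕ → ℕ) :
    ∑ x ∈ S, g x + 1 ≤ ∏ x ∈ S, (g x + 1) := by
  classical
  induction S using Finset.induction_on with
  | empty => simp
  | insert x S hx ih =>
    rw [Finset.sum_insert hx, Finset.prod_insert hx]
    nlinarith [Nat.zero_le (g x), Nat.zero_le (∑ x ∈ S, g x)]

lemma card_divisors_ge (m : ℕ) (hm : m ≠ 0) :
    (m.factorization.sum fun _ e => e) - m.factorization 2 + 1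
      ≤ (ordCompl[2] m).divisors.card := by
  have hq : ordCompl[2] m ≠ 0 := (Nat.ordCompl_pos 2 hm).ne'
  rw [Nat.card_divisors hq]
  refine le_trans (Nat.add_le_add_right ?_ 1) (sum_lt_prod_succ _ _)
  have h1 : (ordCompl[2] m).factorization = m.factorization.erase 2 :=
    Nat.factorization_ordCompl m 2
  have h2 : m.factorization.sum (fun _ e => e) ≤ m.factorization 2 +
      (m.factorization.erase 2).sum (fun _ e => e) := by
    by_cases hmem : 2 ∈ m.factorization.support
    · exact (Finsupp.add_sum_erase m.factorization 2 (fun _ e => e) hmem).ge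
    · rw [Finsupp.erase_of_notMem_support hmem]; omega
  rw [← h1] at h2
  have h3 : (ordCompl[2] m).factorization.sum (fun _ e => e) =
      ∑ x ∈ (ordCompl[2] m).primeFactors, (ordCompl[2] m).factorization x := rfl
  omega

/-- for even m ≥ 4 with m = 2^α·p₁^{α₁}⋯p_k^{α_k}
(α = m.factorization 2, α₁+⋯+α_k = Ω(m) - α), the crown C_m ⊙ K̄_n admits
at least (α₁+⋯+α_k)(n+1) mutually different edge-magic valences, and at
least (1+α₁+⋯+α_k)(n+1) of them when α ≥ 2. -/
theorem crown_even_valences_lowerBound (m n : ℕ) (hm : 4 ≤ m) (heven : 2 ∣ m)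
    (hn : 1 ≤ n) :
    (∃ S : Finset ℕ,
      ((m.factorization.sum fun _ e => e) - m.factorization 2) * (n + 1) ≤ S.card ∧
      ∀ k ∈ S, ∃ fv fe, IsEdgeMagic (crownEnds m n) fv fe k) ∧
    (2 ≤ m.factorization 2 →
      ∃ S : Finset ℕ,
        ((m.factorization.sum fun _ e => e) - m.factorization 2 + 1) * (n + 1) ≤ S.card ∧
        ∀ k ∈ S, ∃ fv fe, IsEdgeMagic (crownEnds m n) fv fe k) := by
  have hm0 : m ≠ 0 := by omega
  have hcard := card_divisors_ge m hm0
  have hα : 1 ≤ m.factorization 2 :=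
    (Nat.Prime.dvd_iff_one_le_factorization Nat.prime_two hm0).mp heven
  have hprod : 2 ^ m.factorization 2 * (ordCompl[2] m) = m := Nat.ordProj_mul_ordCompl_eq_self m 2
  have hqpos : 0 < ordCompl[2] m := Nat.ordCompl_pos 2 hm0
  have hqodd : ¬ 2 ∣ ordCompl[2] m := Nat.not_dvd_ordCompl Nat.prime_two hm0
  generalize (ordCompl[2] m) = q at *
  generalize m.factorization 2 = α at *
  have hodd : ∀ r, r ∣ q → r % 2 = 1 := by
    intro r hr
    by_contra hne
    exact hqodd (dvd_trans (by omega) hr)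
  have hquot : ∀ r d, q = r * d → m / r = 2 ^ α * d := by
    intro r d h
    have hr : 0 < r := by
      rcases Nat.eq_zero_or_pos r with h0 | h0
      · subst h0; omega
      · exact h0
    rw [← hprod, h, Nat.mul_left_comm]
    exact Nat.mul_div_cancel_left _ hr
  have hdm : ∀ r, r ∣ q → r ∣ m := fun r hr => hprod ▸ Dvd.dvd.mul_left hr _
  constructor
  · obtain ⟨S, hS, hS'⟩ := valence_set m n heven q.properDivisors (by
      intro r hr
      obtain ⟨hrq, hlt⟩ := Nat.mem_properDivisors.mp hr
      refine ⟨hodd r hrq, hdm r hrq, ?_⟩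
      obtain ⟨d, hd⟩ := hrq
      rw [hquot r d hd]
      have h1 : 2 ^ 1 ≤ 2 ^ α := Nat.pow_le_pow_right (by norm_num) hα
      have h2 : 2 ≤ d := by
        by_contra hlt2
        have : d = 0 ∨ d = 1 := by omega
        rcases this with rfl | rfl <;> omega
      exact Nat.mul_le_mul h1 h2)
    refine ⟨S, le_trans (Nat.mul_le_mul_right _ ?_) hS, hS'⟩
    have h3 : q.divisors.card = q.properDivisors.card + 1 := by
      rw [← Nat.cons_self_properDivisors hqpos.ne', Finset.card_cons]
    omega
  · intro hα2
    obtain ⟨S, hS, hS'⟩ := valence_set m n heven q.divisors (by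
      intro r hr
      have hrq := Nat.dvd_of_mem_divisors hr
      refine ⟨hodd r hrq, hdm r hrq, ?_⟩
      obtain ⟨d, hd⟩ := hrq
      rw [hquot r d hd]
      have h1 : 2 ^ 2 ≤ 2 ^ α := Nat.pow_le_pow_right (by norm_num) hα2
      have h2 : 1 ≤ d := by
        by_contra hlt2
        have : d = 0 := by omega
        subst this; omega
      exact Nat.mul_le_mul h1 h2)
    exact ⟨S, le_trans (Nat.mul_le_mul_right _ hcard) hS, hS'⟩
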